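/- arXiv:1301.4206 — 3 statements merged into one kernel-verified Lean document; each statement's English description precedes it below -/
import Mathlib

section
/- (Edge version of Menger's Theorem.) Let G be a finite undirected multigraph and let v and w be two distinct vertices of G. Then there exist k pairwise edge-disjoint ttrails between v and w if and only if no deletion of k−1 edges from G disconnects v and w. -/
open Finset

/-- A finite undirected multigraph: each edge `e : E` has an unordered pair of
endpoints `ends e : Sym2 V`.  Loops and parallel edges are allowed and the graph
need not be connected. -/
structure Multigraph (V E : Type*) where
  ends : E → Sym2 V

namespace Multigraph

variable {V E : Type*}

/-- `G.IsChain x y p` : `p` is an alternating sequence `v₁,e₁,…,vₙ,eₙ` (encoded as a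
list of vertex-edge pairs) which forms a walk from `x` to `y` (the final vertex `y`
is omitted, i.e. this is "truncated"). -/
def IsChain (G : Multigraph V E) : V → V → List (V × E) → Prop
  | x, y, [] => x = y
  | x, y, (v, e) :: rest => v = x ∧ ∃ w, G.ends e = s(x, w) ∧ G.IsChain w y rest

/-- A truncated trail (ttrail) from `x` to `y`: an alternating walk with no repeated
edges, final vertex omitted. -/
def IsTtrail (G : Multigraph V E) (x y : V) (p : List (V × E)) : Prop :=
  G.IsChain x y p ∧ (p.map Prod.snd).Nodup

/-- A cycle: a closed ttrail with no repeated vertices. -/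
def IsCycle (G : Multigraph V E) (x : V) (p : List (V × E)) : Prop :=
  G.IsTtrail x x p ∧ (p.map Prod.fst).Nodup

/-- Two ttrails are edge-disjoint if they have no common edges. -/
def EdgeDisjoint (p q : List (V × E)) : Prop :=
  ∀ e, e ∈ p.map Prod.snd → e ∉ q.map Prod.snd

/-- `k`-edge-connectivity: two distinct vertices are `k`-edge-connected if there are
`k` pairwise edge-disjoint ttrails between them; every vertex is `k`-edge-connected
to itself. -/
def KConn (G : Multigraph V E) (k : ℕ) (v w : V) : Prop :=
  v = w ∨ ∃ p : Fin k → List (V × E),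
    (∀ i, G.IsTtrail v w (p i)) ∧ ∀ i j, i ≠ j → EdgeDisjoint (p i) (p j)

/-- `conk G k` : the number of equivalence classes of `k`-edge-connected vertices. -/
noncomputable def conk (G : Multigraph V E) (k : ℕ) : ℕ :=
  Nat.card (Quotient (Relation.EqvGen.setoid (G.KConn k)))

/-- The number of connected components of `G`. -/
noncomputable def con (G : Multigraph V E) : ℕ := G.conk 1

section Homology

variable [Fintype V] [Fintype E] [DecidableEq V] [DecidableEq E]

/-- The vector in `F₂^V` which is the sum of the two endpoints of the edge `e`
(so a loop is sent to `0`). -/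
def edgeVec (G : Multigraph V E) (e : E) : V → ZMod 2 := fun v =>
  Sym2.lift ⟨fun a b => (if v = a then (1 : ZMod 2) else 0) + (if v = b then 1 else 0),
    fun _ _ => add_comm _ _⟩ (G.ends e)

/-- The boundary map `δ : F₂^E → F₂^V`, sending each edge to the sum of its two
adjacent vertices. -/
def boundary (G : Multigraph V E) : (E → ZMod 2) →ₗ[ZMod 2] (V → ZMod 2) where
  toFun c := fun v => ∑ e, c e * G.edgeVec e v
  map_add' c d := by
    funext v
    simp [add_mul, Finset.sum_add_distrib]
  map_smul' r c := by
    funext v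
    simp [Finset.mul_sum, mul_assoc]

/-- The Cycle Space of `G` : the kernel of the boundary map. -/
def cycleSpace (G : Multigraph V E) : Submodule (ZMod 2) (E → ZMod 2) :=
  LinearMap.ker G.boundary

/-- The indicator vector of a vertex in `F₂^V`. -/
def vert (v : V) : V → ZMod 2 := fun w => if w = v then 1 else 0

/-- A `k`-weak homological cycle: a homological path between two `k`-edge-connected
vertices. -/
def IsWeakCycle (G : Multigraph V E) (k : ℕ) (c : E → ZMod 2) : Prop :=
  ∃ v w, G.KConn k v w ∧ G.boundary c = vert v + vert w

/-- The `k`-Weak Cycle Space: the span of all `k`-weak homological cycles. -/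
def weakCycleSpace (G : Multigraph V E) (k : ℕ) : Submodule (ZMod 2) (E → ZMod 2) :=
  Submodule.span (ZMod 2) {c | G.IsWeakCycle k c}

/-- `eps p` : the set of edges of the ttrail `p`, as a vector in `F₂^E`. -/
def eps (p : List (V × E)) : E → ZMod 2 := fun e => if e ∈ p.map Prod.snd then 1 else 0

/-- The `F₂`-linear extension of `f : E → A` to subsets of `E`: the sum of `f` over
the edges of the subset `S`. -/
def fSum {A : Type*} [AddCommGroup A] (f : E → A) (S : E → ZMod 2) : A :=
  ∑ e ∈ Finset.univ.filter fun e => S e = 1, f e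

end Homology

section Balanced

variable {A : Type*} [AddCommGroup A]

/-- The sum `g(v₁)+f(e₁)+…+g(vₙ)+f(eₙ)` of the values of a vertex-function `g` and an
edge-function `f` along a ttrail `v₁,e₁,…,vₙ,eₙ`. -/
def pathSum (g : V → A) (f : E → A) (p : List (V × E)) : A :=
  (p.map fun ve => g ve.1 + f ve.2).sum

/-- The sum `h(v₁)+h(e₁)+…+h(vₙ)+h(eₙ)` of the values of `h : V ∪ E → A` along a
ttrail `v₁,e₁,…,vₙ,eₙ`. -/
def wSum (h : V ⊕ E → A) (p : List (V × E)) : A :=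
  (p.map fun ve => h (Sum.inl ve.1) + h (Sum.inr ve.2)).sum

lemma pathSum_cons (g : V → A) (f : E → A) (a : V × E) (t : List (V × E)) :
    pathSum g f (a :: t) = (g a.1 + f a.2) + pathSum g f t := by
  simp [pathSum]

lemma pathSum_zero (p : List (V × E)) : pathSum (0 : V → A) (0 : E → A) p = 0 := by
  induction p with
  | nil => simp [pathSum]
  | cons a t ih => simp [pathSum_cons, ih]

lemma pathSum_add (g g' : V → A) (f f' : E → A) (p : List (V × E)) :
    pathSum (g + g') (f + f') p = pathSum g f p + pathSum g' f' p := by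
  induction p with
  | nil => simp [pathSum]
  | cons a t ih => simp only [pathSum_cons, Pi.add_apply, ih]; abel

lemma pathSum_neg (g : V → A) (f : E → A) (p : List (V × E)) :
    pathSum (-g) (-f) p = -pathSum g f p := by
  induction p with
  | nil => simp [pathSum]
  | cons a t ih => simp only [pathSum_cons, Pi.neg_apply, ih]; abel

lemma wSum_cons (h : V ⊕ E → A) (a : V × E) (t : List (V × E)) :
    wSum h (a :: t) = (h (Sum.inl a.1) + h (Sum.inr a.2)) + wSum h t := by
  simp [wSum]

lemma wSum_zero (p : List (V × E)) : wSum (0 : V ⊕ E → A) p = 0 := by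
  induction p with
  | nil => simp [wSum]
  | cons a t ih => simp [wSum_cons, ih]

lemma wSum_add (h h' : V ⊕ E → A) (p : List (V × E)) :
    wSum (h + h') p = wSum h p + wSum h' p := by
  induction p with
  | nil => simp [wSum]
  | cons a t ih => simp only [wSum_cons, Pi.add_apply, ih]; abel

lemma wSum_neg (h : V ⊕ E → A) (p : List (V × E)) :
    wSum (-h) p = -wSum h p := by
  induction p with
  | nil => simp [wSum]
  | cons a t ih => simp only [wSum_cons, Pi.neg_apply, ih]; abel

/-- A function `f : E → A` is balanced if the sum of its values along every closed
ttrail of `G` is zero. -/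
def BalancedE (G : Multigraph V E) (f : E → A) : Prop :=
  ∀ x p, G.IsTtrail x x p → pathSum (0 : V → A) f p = 0

/-- A function `g : V → A` is balanceable if some `f : E → A` balances it, i.e. the
sum of the values of `g` and `f` along every closed ttrail of `G` is zero. -/
def Balanceable (G : Multigraph V E) (g : V → A) : Prop :=
  ∃ f : E → A, ∀ x p, G.IsTtrail x x p → pathSum g f p = 0

/-- A function `h : V ∪ E → A` is balanced if the sum of its values along every
closed ttrail of `G` is zero. -/
def BalancedW (G : Multigraph V E) (h : V ⊕ E → A) : Prop :=
  ∀ x p, G.IsTtrail x x p → wSum h p = 0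

/-- `H(E,A)` : the group of balanced functions from `E` to `A`. -/
def Hgroup (G : Multigraph V E) (A : Type*) [AddCommGroup A] : AddSubgroup (E → A) where
  carrier := {f | G.BalancedE f}
  zero_mem' := fun _ p _ => pathSum_zero p
  add_mem' := by
    intro f f' hf hf' x p hp
    have h := pathSum_add (0 : V → A) 0 f f' p
    rw [add_zero] at h
    rw [h, hf x p hp, hf' x p hp, add_zero]
  neg_mem' := by
    intro f hf x p hp
    have h := pathSum_neg (0 : V → A) f p
    rw [neg_zero] at h
    rw [h, hf x p hp, neg_zero]

/-- `B(V,A)` : the group of balanceable functions from `V` to `A`. -/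
def Bgroup (G : Multigraph V E) (A : Type*) [AddCommGroup A] : AddSubgroup (V → A) where
  carrier := {g | G.Balanceable g}
  zero_mem' := ⟨0, fun _ p _ => pathSum_zero p⟩
  add_mem' := by
    rintro g g' ⟨f, hf⟩ ⟨f', hf'⟩
    exact ⟨f + f', fun x p hp => by rw [pathSum_add, hf x p hp, hf' x p hp, add_zero]⟩
  neg_mem' := by
    rintro g ⟨f, hf⟩
    exact ⟨-f, fun x p hp => by rw [pathSum_neg, hf x p hp, neg_zero]⟩

/-- `W(V ∪ E, A)` : the group of balanced functions from `V ∪ E` to `A`. -/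
def Wgroup (G : Multigraph V E) (A : Type*) [AddCommGroup A] : AddSubgroup (V ⊕ E → A) where
  carrier := {h | G.BalancedW h}
  zero_mem' := fun _ p _ => wSum_zero p
  add_mem' := by
    intro h h' hh hh' x p hp
    rw [wSum_add, hh x p hp, hh' x p hp, add_zero]
  neg_mem' := by
    intro h hh x p hp
    rw [wSum_neg, hh x p hp, neg_zero]

end Balanced

/-- A `3`-weakly closed ttrail (a ttrail between `3`-edge-connected vertices) which is
short: no inner vertex is `3`-edge-connected to the initial vertex. -/
def ShortW (G : Multigraph V E) (x y : V) (p : List (V × E)) : Prop :=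
  G.IsTtrail x y p ∧ G.KConn 3 x y ∧ ∀ v ∈ (p.map Prod.fst).tail, ¬ G.KConn 3 v x

/-- `G.ShortChain x y L` : `L` is a list of nontrivial short `3`-weakly closed ttrails
which concatenate into a ttrail from `x` to `y`. -/
def ShortChain (G : Multigraph V E) : V → V → List (List (V × E)) → Prop
  | x, y, [] => x = y
  | x, y, s :: rest => s ≠ [] ∧ ∃ z, G.ShortW x z s ∧ G.ShortChain z y rest

/-- `A₂` : the subgroup of elements of order dividing `2` in `A`. -/
def torsion2 (A : Type*) [AddCommGroup A] : AddSubgroup A where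
  carrier := {a | 2 • a = 0}
  zero_mem' := by simp
  add_mem' := by
    intro a b ha hb
    simp only [Set.mem_setOf_eq] at *
    rw [smul_add, ha, hb, add_zero]
  neg_mem' := by
    intro a ha
    simp only [Set.mem_setOf_eq] at *
    rw [smul_neg, ha, neg_zero]

/-- `2A` : the image of the doubling map `a ↦ 2a`. -/
def double2 (A : Type*) [AddCommGroup A] : AddSubgroup A where
  carrier := {b | ∃ a, b = 2 • a}
  zero_mem' := ⟨0, by simp⟩
  add_mem' := by
    rintro a b ⟨x, rfl⟩ ⟨y, rfl⟩
    exact ⟨x + y, by rw [smul_add]⟩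
  neg_mem' := by
    rintro a ⟨x, rfl⟩
    exact ⟨-x, by rw [smul_neg]⟩

end Multigraph

namespace Multigraph

variable {V E : Type*} [Fintype V] [Fintype E] [DecidableEq V] [DecidableEq E]

/-!
Integral unit flows from `v` to `w`: as long as no set of `n` edges separates `v` from `w`, a flow
of value `n` can be augmented, since otherwise the vertices reachable in the residual graph are left
by exactly `n` edges, all saturated. Conversely a flow of value `n` contains `n` edge-disjoint
ttrails: a nonzero flow carries some ttrail from `v` to `w`, and subtracting it frees its edges.
-/

section UnitFlow

open Finsupp

variable {V E : Type*} {G : Multigraph V E} {v w x y z : V} {e : E} {p q : List (V × E)} {S : Set V}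
  {n : ℕ} {f : E →₀ ℤ}

theorem isChain_append :
    G.IsChain x y (p ++ q) ↔ ∃ z, G.IsChain x z p ∧ G.IsChain z y q := by
  induction p generalizing x with
  | nil => simp [IsChain]
  | cons a p ih =>
    obtain ⟨u, e⟩ := a
    simp only [List.cons_append, IsChain, ih]
    grind

theorem IsChain.exists_suffix_of_mem_ends (hq : G.IsChain z y q) (he : e ∈ q.map Prod.snd)
    (hx : x ∈ G.ends e) : ∃ r, r <:+ q ∧ G.IsChain x y r := by
  induction q generalizing z with
  | nil => simp at he
  | cons a q ih =>
    obtain ⟨u, e'⟩ := a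
    obtain ⟨rfl, t, ht, hq'⟩ := hq
    rw [List.map_cons, List.mem_cons] at he
    rcases he with rfl | he
    · rw [ht, Sym2.mem_iff] at hx
      rcases hx with rfl | rfl
      · exact ⟨_, List.suffix_rfl, rfl, t, ht, hq'⟩
      · exact ⟨q, List.suffix_cons _ _, hq'⟩
    · obtain ⟨r, hr, hrc⟩ := ih hq' he
      exact ⟨r, hr.trans (List.suffix_cons _ _), hrc⟩

theorem IsChain.exists_isTtrail_subset (hp : G.IsChain x y p) :
    ∃ q, G.IsTtrail x y q ∧ q ⊆ p := by
  induction p generalizing x with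
  | nil => exact ⟨[], ⟨hp, List.nodup_nil⟩, List.Subset.refl _⟩
  | cons a p ih =>
    obtain ⟨u, e⟩ := a
    obtain ⟨rfl, z, hz, hzy⟩ := hp
    obtain ⟨q, ⟨hq, hnodup⟩, hqp⟩ := ih hzy
    by_cases he : e ∈ q.map Prod.snd
    · obtain ⟨r, hrq, hr⟩ := hq.exists_suffix_of_mem_ends he (hz ▸ Sym2.mem_mk_left u z)
      exact ⟨r, ⟨hr, hnodup.sublist (hrq.sublist.map _)⟩,
        fun a ha => List.mem_cons_of_mem _ (hqp (hrq.subset ha))⟩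
    · exact ⟨(u, e) :: q, ⟨⟨rfl, z, hz, hq⟩, List.nodup_cons.2 ⟨he, hnodup⟩⟩,
        List.cons_subset_cons _ hqp⟩

theorem exists_isTtrail_or_exists_separating (G : Multigraph V E) (v w : V)
    (P : V × E → Prop) :
    (∃ q, G.IsTtrail v w q ∧ ∀ a ∈ q, P a) ∨
      ∃ S : Set V, v ∈ S ∧ w ∉ S ∧ ∀ x ∈ S, ∀ y ∉ S, ∀ e, G.ends e = s(x, y) → ¬ P (x, e) := by
  by_cases hw : ∃ p, G.IsChain v w p ∧ ∀ a ∈ p, P a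
  · obtain ⟨p, hp, hpP⟩ := hw
    obtain ⟨q, hq, hqp⟩ := hp.exists_isTtrail_subset
    exact .inl ⟨q, hq, fun a ha => hpP a (hqp ha)⟩
  · refine .inr ⟨{x | ∃ p, G.IsChain v x p ∧ ∀ a ∈ p, P a}, ⟨[], rfl, by simp⟩, hw, ?_⟩
    rintro x ⟨p, hp, hpP⟩ y hy e he hP
    refine hy ⟨p ++ [(x, e)], isChain_append.2 ⟨x, hp, rfl, y, he, rfl⟩, ?_⟩
    exact List.forall_mem_append.2 ⟨hpP, List.forall_mem_singleton.2 hP⟩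

/-- The edge cut of `S`: the edges with exactly one endpoint in `S`. -/
def cut (G : Multigraph V E) (S : Set V) : Set E :=
  {e | ∃ x ∈ S, ∃ y ∉ S, G.ends e = s(x, y)}

theorem IsChain.exists_mem_cut (hp : G.IsChain x y p) (hx : x ∈ S) (hy : y ∉ S) :
    ∃ e ∈ p.map Prod.snd, e ∈ G.cut S := by
  induction p generalizing x with
  | nil => exact absurd (hp ▸ hx) hy
  | cons a p ih =>
    obtain ⟨u, e⟩ := a
    obtain ⟨rfl, z, hz, hzy⟩ := hp
    by_cases hzS : z ∈ S
    · obtain ⟨e', he', hcut⟩ := ih hzy hzS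
      exact ⟨e', List.mem_cons_of_mem _ he', hcut⟩
    · exact ⟨e, List.mem_cons_self, u, hx, z, hzS, hz⟩

/-- The tail of `e` in an arbitrary reference orientation of the edges, which gives integer flows
their sign. -/
noncomputable def tail (G : Multigraph V E) (e : E) : V := (Quot.out (G.ends e)).1

/-- The head of `e` in the same reference orientation as `tail`. -/
noncomputable def head (G : Multigraph V E) (e : E) : V := (Quot.out (G.ends e)).2

theorem ends_eq (G : Multigraph V E) (e : E) : G.ends e = s(G.tail e, G.head e) :=
  (Quot.out_eq (G.ends e)).symm

open Classical in
/-- The sign of the step `(x, e)`, which traverses `e` starting at its endpoint `x`: whether the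
step agrees with the reference orientation of `e`. Loops have sign `1`. -/
noncomputable def sign (G : Multigraph V E) (a : V × E) : ℤˣ :=
  if a.1 = G.tail a.2 then 1 else -1

theorem sign_smul_sub {A : Type*} [AddCommGroup A] (he : G.ends e = s(x, y)) (h : V → A) :
    (G.sign (x, e) : ℤ) • (h (G.tail e) - h (G.head e)) = h x - h y := by
  rw [G.ends_eq] at he
  rcases Sym2.eq_iff.1 he with ⟨rfl, rfl⟩ | ⟨rfl, rfl⟩
  · simp [sign]
  · by_cases hloop : G.head e = G.tail e <;> simp [sign, hloop]

/-- The boundary map from integral 1-chains to 0-chains, with `∂ e = tail e - head e`; applied to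
a flow it gives the net outflow at each vertex. -/
noncomputable def orientedBoundary (G : Multigraph V E) : (E →₀ ℤ) →ₗ[ℤ] (V →₀ ℤ) :=
  linearCombination ℤ fun e => single (G.tail e) 1 - single (G.head e) 1

/-- The flow which sends one unit along each step of `p`. -/
noncomputable def chainFlow (G : Multigraph V E) (p : List (V × E)) : E →₀ ℤ :=
  (p.map fun a => single a.2 (G.sign a : ℤ)).sum

theorem chainFlow_cons (G : Multigraph V E) (a : V × E) (p : List (V × E)) :
    G.chainFlow (a :: p) = single a.2 (G.sign a : ℤ) + G.chainFlow p := by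
  simp [chainFlow]

theorem IsChain.orientedBoundary_chainFlow (hp : G.IsChain x y p) :
    G.orientedBoundary (G.chainFlow p) = single x 1 - single y 1 := by
  induction p generalizing x with
  | nil =>
    obtain rfl : x = y := hp
    simp [chainFlow]
  | cons a p ih =>
    obtain ⟨u, e⟩ := a
    obtain ⟨rfl, z, hz, hzy⟩ := hp
    rw [chainFlow_cons, map_add, ih hzy, orientedBoundary, linearCombination_single,
      sign_smul_sub hz fun t => single t (1 : ℤ), sub_add_sub_cancel]

theorem chainFlow_apply_of_notMem (he : e ∉ p.map Prod.snd) : G.chainFlow p e = 0 := by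
  induction p with
  | nil => simp [chainFlow]
  | cons a p ih =>
    rw [List.map_cons, List.mem_cons, not_or] at he
    rw [chainFlow_cons, Finsupp.add_apply, single_eq_of_ne he.1, ih he.2, add_zero]

theorem chainFlow_apply_of_mem (hp : (p.map Prod.snd).Nodup) {a : V × E} (ha : a ∈ p) :
    G.chainFlow p a.2 = G.sign a := by
  induction p with
  | nil => simp at ha
  | cons b p ih =>
    rw [List.map_cons, List.nodup_cons] at hp
    rw [chainFlow_cons, Finsupp.add_apply]
    rcases List.mem_cons.1 ha with rfl | ha
    · rw [single_eq_same, chainFlow_apply_of_notMem hp.1, add_zero]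
    · have hab : a.2 ≠ b.2 := fun h => hp.1 (h ▸ List.mem_map_of_mem ha)
      rw [single_eq_of_ne hab, ih hp.2 ha, zero_add]

/-- An integral flow of value `n` from `v` to `w` in which every edge has capacity one. -/
structure IsUnitFlow (G : Multigraph V E) (v w : V) (n : ℕ) (f : E →₀ ℤ) : Prop where
  abs_le_one : ∀ e, |f e| ≤ 1
  orientedBoundary_eq : G.orientedBoundary f = n • (single v 1 - single w 1)

theorem isUnitFlow_zero (G : Multigraph V E) (v w : V) : G.IsUnitFlow v w 0 0 :=
  ⟨by simp, by simp⟩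

/-- The flow that `f` sends out of `S` through the edge `e`. -/
noncomputable def outflow (G : Multigraph V E) (f : E →₀ ℤ) (S : Set V) (e : E) : ℤ :=
  f e * (S.indicator 1 (G.tail e) - S.indicator 1 (G.head e))

theorem outflow_of_ends_eq (f : E →₀ ℤ) (hx : x ∈ S) (hy : y ∉ S) (he : G.ends e = s(x, y)) :
    G.outflow f S e = G.sign (x, e) * f e := by
  have hsign := sign_smul_sub he (S.indicator (1 : V → ℤ))
  rw [Set.indicator_of_mem hx, Set.indicator_of_notMem hy, Pi.one_apply, sub_zero,
    smul_eq_mul] at hsign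
  rw [outflow, ← Int.eq_of_mul_eq_one hsign, mul_comm]

theorem outflow_of_notMem_cut (f : E →₀ ℤ) (he : e ∉ G.cut S) : G.outflow f S e = 0 := by
  have hiff : G.tail e ∈ S ↔ G.head e ∈ S := by
    constructor <;> intro hmem <;> by_contra hnot
    · exact he ⟨_, hmem, _, hnot, G.ends_eq e⟩
    · exact he ⟨_, hmem, _, hnot, (G.ends_eq e).trans Sym2.eq_swap⟩
  by_cases htail : G.tail e ∈ S
  · simp [outflow, htail, hiff.1 htail]
  · simp [outflow, htail, mt hiff.2 htail]

theorem IsUnitFlow.sum_outflow (hf : G.IsUnitFlow v w n f) (hv : v ∈ S) (hw : w ∉ S) :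
    ∑ e ∈ f.support, G.outflow f S e = n := by
  have hsum := congrArg (linearCombination ℤ (S.indicator (1 : V → ℤ))) hf.orientedBoundary_eq
  rw [orientedBoundary, apply_linearCombination, linearCombination_apply] at hsum
  simpa [Finsupp.sum, outflow, hv, hw] using hsum

theorem IsUnitFlow.add_chainFlow (hf : G.IsUnitFlow v w n f) (hq : G.IsTtrail v w q)
    (hresidual : ∀ a ∈ q, G.sign a * f a.2 ≤ 0) :
    G.IsUnitFlow v w (n + 1) (f + G.chainFlow q) where
  abs_le_one e := by
    have hfe := hf.abs_le_one e
    rw [Finsupp.add_apply]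
    by_cases he : e ∈ q.map Prod.snd
    · obtain ⟨a, ha, rfl⟩ := List.mem_map.1 he
      have hle := hresidual a ha
      rw [chainFlow_apply_of_mem hq.2 ha]
      rw [abs_le] at hfe ⊢
      rcases Int.isUnit_iff.1 (G.sign a).isUnit with hsign | hsign <;> rw [hsign] at hle ⊢ <;> omega
    · rwa [chainFlow_apply_of_notMem he, add_zero]
  orientedBoundary_eq := by
    rw [map_add, hf.orientedBoundary_eq, hq.1.orientedBoundary_chainFlow, succ_nsmul]

theorem IsUnitFlow.sub_chainFlow_apply_of_mem (hf : G.IsUnitFlow v w n f)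
    (hq : (q.map Prod.snd).Nodup) (hpos : ∀ a ∈ q, 0 < G.sign a * f a.2)
    (he : e ∈ q.map Prod.snd) : (f - G.chainFlow q) e = 0 := by
  obtain ⟨a, ha, rfl⟩ := List.mem_map.1 he
  have hfe := abs_le.1 (hf.abs_le_one a.2)
  have hlt := hpos a ha
  rw [Finsupp.sub_apply, chainFlow_apply_of_mem hq ha]
  rcases Int.isUnit_iff.1 (G.sign a).isUnit with hsign | hsign <;> rw [hsign] at hlt ⊢ <;> omega

theorem sub_chainFlow_apply_of_notMem (f : E →₀ ℤ) (he : e ∉ q.map Prod.snd) :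
    (f - G.chainFlow q) e = f e := by
  rw [Finsupp.sub_apply, chainFlow_apply_of_notMem he, sub_zero]

theorem IsUnitFlow.sub_chainFlow (hf : G.IsUnitFlow v w (n + 1) f) (hq : G.IsTtrail v w q)
    (hpos : ∀ a ∈ q, 0 < G.sign a * f a.2) :
    G.IsUnitFlow v w n (f - G.chainFlow q) where
  abs_le_one e := by
    by_cases he : e ∈ q.map Prod.snd
    · simp [hf.sub_chainFlow_apply_of_mem hq.2 hpos he]
    · rw [sub_chainFlow_apply_of_notMem f he]
      exact hf.abs_le_one e
  orientedBoundary_eq := by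
    rw [map_sub, hf.orientedBoundary_eq, hq.1.orientedBoundary_chainFlow, succ_nsmul,
      add_sub_cancel_right]

theorem IsUnitFlow.exists_finset_eq_cut (hf : G.IsUnitFlow v w n f) (hv : v ∈ S) (hw : w ∉ S)
    (hsat : ∀ x ∈ S, ∀ y ∉ S, ∀ e, G.ends e = s(x, y) → 0 < G.sign (x, e) * f e) :
    ∃ F : Finset E, F.card = n ∧ (F : Set E) = G.cut S := by
  classical
  have houtflow : ∀ e ∈ G.cut S, G.outflow f S e = 1 := by
    rintro e ⟨x, hx, y, hy, he⟩
    refine le_antisymm ?_ ?_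
    · calc G.outflow f S e ≤ |G.sign (x, e) * f e| := by
            rw [outflow_of_ends_eq f hx hy he]; exact le_abs_self _
        _ = |f e| := by rw [abs_mul, Int.isUnit_iff_abs_eq.1 (Units.isUnit _), one_mul]
        _ ≤ 1 := hf.abs_le_one e
    · rw [outflow_of_ends_eq f hx hy he]
      exact hsat x hx y hy e he
  have hsupport : ∀ e ∈ G.cut S, e ∈ f.support := by
    intro e he
    rw [Finsupp.mem_support_iff]
    intro hzero
    simpa [outflow, hzero] using houtflow e he
  refine ⟨{e ∈ f.support | e ∈ G.cut S}, ?_, ?_⟩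
  · have hsum := hf.sum_outflow hv hw
    rw [← Finset.sum_filter_of_ne fun e _ hne => not_imp_comm.1 (outflow_of_notMem_cut f) hne,
      Finset.sum_congr rfl fun e he => houtflow e (Finset.mem_filter.1 he).2] at hsum
    simpa using hsum
  · ext e
    simpa using hsupport e

theorem IsUnitFlow.exists_succ (hf : G.IsUnitFlow v w n f)
    (hconn : ∀ F : Finset E, F.card = n →
      ∃ q, G.IsTtrail v w q ∧ ∀ e ∈ q.map Prod.snd, e ∉ F) :
    ∃ g, G.IsUnitFlow v w (n + 1) g := by
  rcases G.exists_isTtrail_or_exists_separating v w (fun a => G.sign a * f a.2 ≤ 0) with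
    ⟨q, hq, hresidual⟩ | ⟨S, hv, hw, hsat⟩
  · exact ⟨_, hf.add_chainFlow hq hresidual⟩
  · simp only [not_le] at hsat
    obtain ⟨F, hcard, hF⟩ := hf.exists_finset_eq_cut hv hw hsat
    obtain ⟨q, hq, hqF⟩ := hconn F hcard
    obtain ⟨e, he, hcut⟩ := hq.1.exists_mem_cut hv hw
    exact absurd (Finset.mem_coe.1 (hF ▸ hcut)) (hqF e he)

theorem exists_isUnitFlow
    (hconn : ∀ F : Finset E, F.card < n →
      ∃ q, G.IsTtrail v w q ∧ ∀ e ∈ q.map Prod.snd, e ∉ F) :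
    ∃ f, G.IsUnitFlow v w n f := by
  induction n with
  | zero => exact ⟨0, G.isUnitFlow_zero v w⟩
  | succ n ih =>
    obtain ⟨f, hf⟩ := ih fun F hF => hconn F (hF.trans n.lt_succ_self)
    exact hf.exists_succ fun F hF => hconn F (hF ▸ n.lt_succ_self)

theorem IsUnitFlow.exists_isTtrail_pos (hf : G.IsUnitFlow v w n f) (hn : 0 < n) :
    ∃ q, G.IsTtrail v w q ∧ ∀ a ∈ q, 0 < G.sign a * f a.2 := by
  refine (G.exists_isTtrail_or_exists_separating v w _).resolve_right ?_
  rintro ⟨S, hv, hw, hnonpos⟩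
  have hsum : ∑ e ∈ f.support, G.outflow f S e ≤ 0 := by
    refine Finset.sum_nonpos fun e _ => ?_
    by_cases hcut : e ∈ G.cut S
    · obtain ⟨x, hx, y, hy, he⟩ := hcut
      rw [outflow_of_ends_eq f hx hy he]
      exact not_lt.1 (hnonpos x hx y hy e he)
    · exact (outflow_of_notMem_cut f hcut).le
  rw [hf.sum_outflow hv hw] at hsum
  omega

theorem IsUnitFlow.exists_edgeDisjoint (hf : G.IsUnitFlow v w n f) :
    ∃ p : Fin n → List (V × E), (∀ i, G.IsTtrail v w (p i)) ∧
      (∀ i j, i ≠ j → EdgeDisjoint (p i) (p j)) ∧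
      ∀ i, ∀ e ∈ (p i).map Prod.snd, e ∈ f.support := by
  induction n generalizing f with
  | zero => exact ⟨Fin.elim0, Fin.rec0, Fin.rec0, Fin.rec0⟩
  | succ n ih =>
    obtain ⟨q, hq, hpos⟩ := hf.exists_isTtrail_pos n.succ_pos
    obtain ⟨p, hp, hdisj, hsupport⟩ := ih (hf.sub_chainFlow hq hpos)
    have hpq : ∀ i, ∀ e ∈ (p i).map Prod.snd, e ∉ q.map Prod.snd := fun i e he heq =>
      Finsupp.mem_support_iff.1 (hsupport i e he) (hf.sub_chainFlow_apply_of_mem hq.2 hpos heq)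
    refine ⟨Fin.cons q p, Fin.cases hq hp, ?_, Fin.cases ?_ ?_⟩
    · exact pairwise_fin_succ_iff.2 ⟨hpq, fun j e heq hep => hpq j e hep heq,
        fun i j hij => hdisj i j hij⟩
    · intro e he
      obtain ⟨a, ha, rfl⟩ := List.mem_map.1 he
      exact Finsupp.mem_support_iff.2 (right_ne_zero_of_mul (hpos a ha).ne')
    · intro i e he
      have hne := Finsupp.mem_support_iff.1 (hsupport i e he)
      rw [sub_chainFlow_apply_of_notMem f (hpq i e he)] at hne
      exact Finsupp.mem_support_iff.2 hne

theorem exists_avoiding_of_edgeDisjoint {ι : Type*} [Fintype ι] {p : ι → List (V × E)}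
    (hdisj : ∀ i j, i ≠ j → EdgeDisjoint (p i) (p j)) {F : Finset E}
    (hF : F.card < Fintype.card ι) : ∃ i, ∀ e ∈ (p i).map Prod.snd, e ∉ F := by
  by_contra! hmeets
  choose g hgp hgF using hmeets
  have hinj : Function.Injective g := fun i j hij =>
    not_imp_comm.1 (hdisj i j) fun hd => hd (g i) (hgp i) (hij ▸ hgp j)
  exact hF.not_ge (Finset.card_le_card_of_injOn g (fun i _ => hgF i) hinj.injOn)

theorem stmt3_general (G : Multigraph V E) (v w : V) (k : ℕ) :
    (∃ p : Fin k → List (V × E), (∀ i, G.IsTtrail v w (p i)) ∧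
        ∀ i j, i ≠ j → EdgeDisjoint (p i) (p j)) ↔
      ∀ F : Finset E, F.card < k →
        ∃ q : List (V × E), G.IsTtrail v w q ∧ ∀ e ∈ q.map Prod.snd, e ∉ F := by
  constructor
  · rintro ⟨p, hp, hdisj⟩ F hF
    obtain ⟨i, hi⟩ := exists_avoiding_of_edgeDisjoint hdisj (hF.trans_eq (Fintype.card_fin k).symm)
    exact ⟨p i, hp i, hi⟩
  · intro hconn
    obtain ⟨f, hf⟩ := exists_isUnitFlow hconn
    obtain ⟨p, hp, hdisj, -⟩ := hf.exists_edgeDisjoint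
    exact ⟨p, hp, hdisj⟩

end UnitFlow

theorem stmt3 (G : Multigraph V E) (v w : V) (hvw : v ≠ w) (k : ℕ) :
    (∃ p : Fin k → List (V × E), (∀ i, G.IsTtrail v w (p i)) ∧
        ∀ i j, i ≠ j → EdgeDisjoint (p i) (p j)) ↔
      ∀ F : Finset E, F.card < k →
        ∃ q : List (V × E), G.IsTtrail v w q ∧ ∀ e ∈ q.map Prod.snd, e ∉ F :=
  stmt3_general G v w k

end Multigraph
end

section
/- Let G be a finite undirected multigraph and k a positive integer. The dimension over F₂ of the k-Weak Cycle Space of G equals |E| − con_k(G) + con(G), where con_k(G) is the number of equivalence classes of k-edge-connected vertices and con(G) is the number of connected components of G. -/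
open Finset

namespace Multigraph

variable {V E : Type*} [Fintype V] [Fintype E] [DecidableEq V] [DecidableEq E]

/-!
The boundary map sends the `k`-weak cycle space onto the span of the differences `v - w` of
`k`-edge-connected vertices, and sends `F₂^E` onto the same span for `1`-edge-connected vertices.
Both restrictions have the full cycle space as kernel, so by rank-nullity the codimension of the
`k`-weak cycle space is the difference of the dimensions of the two spans. The differences of
related vertices span the kernel of the surjection `F₂^V → F₂^(V/~)` summing over each equivalence
class, so that span has dimension `|V|` minus the number of classes.
-/

section LinearAlgebra

theorem finrank_map_add_finrank_ker_of_ker_le {K M N : Type*} [DivisionRing K] [AddCommGroup M]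
    [Module K M] [AddCommGroup N] [Module K N] (f : M →ₗ[K] N) {W : Submodule K M}
    [FiniteDimensional K W] (hW : LinearMap.ker f ≤ W) :
    Module.finrank K (W.map f) + Module.finrank K (LinearMap.ker f) = Module.finrank K W := by
  have rank_nullity := (f.domRestrict W).finrank_range_add_finrank_ker
  rwa [LinearMap.range_domRestrict, LinearMap.ker_domRestrict,
    (Submodule.comapSubtypeEquivOfLe hW).finrank_eq] at rank_nullity

variable {ι κ μ : Type*} (K : Type*)

section FiberSum

variable [Fintype ι] [DecidableEq κ] [Semiring K]

/-- The pushforward `K^ι → K^κ` along `f : ι → κ`: the coordinate at `k` is the sum of the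
coordinates over the fibre of `f` above `k`. -/
def fiberSum (f : ι → κ) : (ι → K) →ₗ[K] (κ → K) :=
  Fintype.linearCombination K fun i => Pi.single (f i) 1

theorem fiberSum_single [DecidableEq ι] (f : ι → κ) (i : ι) (a : K) :
    fiberSum K f (Pi.single i a) = Pi.single (f i) a := by
  rw [fiberSum, Fintype.linearCombination_apply_single, ← Pi.single_smul', smul_eq_mul, mul_one]

theorem fiberSum_id [DecidableEq ι] : fiberSum K (id : ι → ι) = LinearMap.id :=
  LinearMap.pi_ext fun i a => fiberSum_single K id i a

theorem fiberSum_comp [Fintype κ] [DecidableEq μ] (g : κ → μ) (f : ι → κ) :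
    fiberSum K g ∘ₗ fiberSum K f = fiberSum K (g ∘ f) := by
  classical
  refine LinearMap.pi_ext fun i a => ?_
  simp only [LinearMap.comp_apply, fiberSum_single, Function.comp_apply]

theorem fiberSum_surjective {f : ι → κ} (hf : Function.Surjective f) :
    Function.Surjective (fiberSum K f) := by
  have := Finite.of_surjective f hf
  have := Fintype.ofFinite κ
  classical
  obtain ⟨g, hg⟩ := hf.hasRightInverse
  refine fun y => ⟨fiberSum K g y, ?_⟩
  rw [← LinearMap.comp_apply, fiberSum_comp, hg.comp_eq_id, fiberSum_id, LinearMap.id_apply]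

end FiberSum

variable [DecidableEq ι]

/-- The subspace of `K^ι` spanned by the differences of standard basis vectors with related
indices. Over `F₂` these differences are the sums `vert v + vert w`. -/
def differenceSpan [Ring K] (R : ι → ι → Prop) : Submodule K (ι → K) :=
  Submodule.span K {x | ∃ i j, R i j ∧ x = Pi.single i 1 - Pi.single j 1}

section Ring

variable [Ring K]

theorem single_sub_single_mem_differenceSpan_of_eqvGen {R : ι → ι → Prop} {i j : ι}
    (h : Relation.EqvGen R i j) :
    (Pi.single i 1 - Pi.single j 1 : ι → K) ∈ differenceSpan K R := by
  induction h with
  | rel i j hij => exact Submodule.subset_span ⟨i, j, hij, rfl⟩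
  | refl i => rw [sub_self]; exact Submodule.zero_mem _
  | symm i j _ ih => rw [← neg_sub]; exact Submodule.neg_mem _ ih
  | trans i j l _ _ hij hjl =>
    rw [← sub_add_sub_cancel _ (Pi.single j 1)]
    exact Submodule.add_mem _ hij hjl

theorem differenceSpan_mono_eqvGen {R S : ι → ι → Prop} (h : R ≤ Relation.EqvGen S) :
    differenceSpan K R ≤ differenceSpan K S := by
  refine Submodule.span_le.2 ?_
  rintro _ ⟨i, j, hij, rfl⟩
  exact single_sub_single_mem_differenceSpan_of_eqvGen K (h i j hij)

theorem differenceSpan_eqvGen (R : ι → ι → Prop) :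
    differenceSpan K (Relation.EqvGen R) = differenceSpan K R :=
  le_antisymm (differenceSpan_mono_eqvGen K le_rfl)
    (differenceSpan_mono_eqvGen K fun i j hij => .rel i j (.rel i j hij))

variable [Fintype ι]

theorem sub_fiberSum_mem_differenceSpan {R : ι → ι → Prop} {r : ι → ι} (hr : ∀ i, R i (r i))
    (x : ι → K) : x - fiberSum K r x ∈ differenceSpan K R := by
  have expansion :
      x - fiberSum K r x = ∑ i, x i • (Pi.single i 1 - Pi.single (r i) 1 : ι → K) := by
    simp only [smul_sub, Finset.sum_sub_distrib, ← pi_eq_sum_univ' x]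
    rfl
  rw [expansion]
  exact Submodule.sum_mem _ fun i _ =>
    Submodule.smul_mem _ _ (Submodule.subset_span ⟨i, r i, hr i, rfl⟩)

theorem ker_fiberSum [DecidableEq κ] {f : ι → κ} (hf : Function.Surjective f) :
    LinearMap.ker (fiberSum K f) = differenceSpan K fun i j => f i = f j := by
  have := Finite.of_surjective f hf
  have := Fintype.ofFinite κ
  apply le_antisymm
  · intro x hx
    obtain ⟨g, hg⟩ := hf.hasRightInverse
    have retraction := sub_fiberSum_mem_differenceSpan K (r := g ∘ f)
      (R := fun i j => f i = f j) (fun i => (hg (f i)).symm) x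
    rwa [← fiberSum_comp, LinearMap.comp_apply, LinearMap.mem_ker.1 hx, map_zero, sub_zero]
      at retraction
  · refine Submodule.span_le.2 ?_
    rintro _ ⟨i, j, hij, rfl⟩
    rw [SetLike.mem_coe, LinearMap.mem_ker, map_sub, fiberSum_single, fiberSum_single, hij,
      sub_self]

end Ring

theorem finrank_differenceSpan_add_card_quotient [DivisionRing K] [Fintype ι]
    (R : ι → ι → Prop) :
    Module.finrank K (differenceSpan K R) + Nat.card (Quotient (Relation.EqvGen.setoid R)) =
      Fintype.card ι := by
  classical
  let s := Relation.EqvGen.setoid R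
  have surjective := fiberSum_surjective K (Quotient.mk_surjective (s := s))
  have ker_eq : LinearMap.ker (fiberSum K (Quotient.mk s)) = differenceSpan K R := by
    rw [ker_fiberSum K Quotient.mk_surjective, ← differenceSpan_eqvGen K R]
    simp only [Quotient.eq]
    rfl
  have rank_nullity := (fiberSum K (Quotient.mk s)).finrank_range_add_finrank_ker
  rwa [LinearMap.range_eq_top.2 surjective, finrank_top, ker_eq,
    Module.finrank_fintype_fun_eq_card, Module.finrank_fintype_fun_eq_card,
    ← Nat.card_eq_fintype_card, add_comm] at rank_nullity

end LinearAlgebra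

section Connectivity

omit [Fintype V] [Fintype E] [DecidableEq V] [DecidableEq E]

/-- Adjacency of vertices: some edge has exactly these endpoints. A vertex is adjacent to itself
only if it carries a loop. -/
def Adj (G : Multigraph V E) (v w : V) : Prop :=
  ∃ e, G.ends e = s(v, w)

variable {G : Multigraph V E} {k : ℕ} {v w : V}

theorem IsChain.reflTransGen_adj {p : List (V × E)} (h : G.IsChain v w p) :
    Relation.ReflTransGen G.Adj v w := by
  induction p generalizing v with
  | nil => exact h ▸ .refl
  | cons step p ih =>
    obtain ⟨-, u, hvu, huw⟩ := h
    exact .head ⟨step.2, hvu⟩ (ih huw)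

theorem KConn.reflTransGen_adj (hk : 0 < k) (h : G.KConn k v w) :
    Relation.ReflTransGen G.Adj v w := by
  rcases h with rfl | ⟨p, hp, -⟩
  · exact .refl
  · exact (hp ⟨0, hk⟩).1.reflTransGen_adj

theorem Adj.kConn_one (h : G.Adj v w) : G.KConn 1 v w := by
  obtain ⟨e, he⟩ := h
  exact .inr ⟨fun _ => [(v, e)], fun _ => ⟨⟨rfl, w, he, rfl⟩, List.nodup_singleton e⟩,
    fun i j hij => absurd (Subsingleton.elim i j) hij⟩

end Connectivity

section Homology

omit [Fintype V] [DecidableEq E]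

theorem vert_add_vert (v w : V) :
    (vert v + vert w : V → ZMod 2) = Pi.single v 1 - Pi.single w 1 := by
  ext u
  simp only [vert, Pi.add_apply, Pi.sub_apply, Pi.single_apply, CharTwo.sub_eq_add]

omit [Fintype E] in
theorem edgeVec_of_ends_eq {G : Multigraph V E} {e : E} {v w : V} (h : G.ends e = s(v, w)) :
    G.edgeVec e = Pi.single v 1 - Pi.single w 1 := by
  rw [← vert_add_vert]
  ext u
  simp only [edgeVec, h, Sym2.lift_mk, vert, Pi.add_apply]

omit [Fintype E] in
theorem range_edgeVec (G : Multigraph V E) :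
    Set.range G.edgeVec = {x | ∃ v w, G.Adj v w ∧ x = Pi.single v 1 - Pi.single w 1} := by
  ext x
  constructor
  · rintro ⟨e, rfl⟩
    obtain ⟨⟨v, w⟩, hvw⟩ := Sym2.mk_surjective (G.ends e)
    exact ⟨v, w, ⟨e, hvw.symm⟩, edgeVec_of_ends_eq hvw.symm⟩
  · rintro ⟨v, w, ⟨e, he⟩, rfl⟩
    exact ⟨e, edgeVec_of_ends_eq he⟩

variable (G : Multigraph V E) {k : ℕ}

theorem boundary_eq_linearCombination :
    G.boundary = Fintype.linearCombination (ZMod 2) G.edgeVec := by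
  ext c v
  simp [boundary, Fintype.linearCombination_apply]

theorem range_boundary_eq_differenceSpan_adj :
    LinearMap.range G.boundary = differenceSpan (ZMod 2) G.Adj := by
  rw [boundary_eq_linearCombination, Fintype.range_linearCombination, range_edgeVec,
    differenceSpan]

theorem differenceSpan_kConn_le_range_boundary (hk : 0 < k) :
    differenceSpan (ZMod 2) (G.KConn k) ≤ LinearMap.range G.boundary := by
  rw [range_boundary_eq_differenceSpan_adj]
  exact differenceSpan_mono_eqvGen _ fun v w h =>
    Relation.EqvGen.reflTransGen_le_eqvGen _ _ _ (h.reflTransGen_adj hk)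

theorem range_boundary_eq_differenceSpan_kConn_one :
    LinearMap.range G.boundary = differenceSpan (ZMod 2) (G.KConn 1) := by
  refine le_antisymm ?_ (G.differenceSpan_kConn_le_range_boundary one_pos)
  rw [range_boundary_eq_differenceSpan_adj]
  exact differenceSpan_mono_eqvGen _ fun v w h => .rel v w h.kConn_one

theorem map_boundary_weakCycleSpace (hk : 0 < k) :
    (G.weakCycleSpace k).map G.boundary = differenceSpan (ZMod 2) (G.KConn k) := by
  rw [weakCycleSpace, Submodule.map_span]
  apply le_antisymm <;> refine Submodule.span_le.2 ?_
  · rintro _ ⟨c, ⟨v, w, hvw, hc⟩, rfl⟩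
    exact Submodule.subset_span ⟨v, w, hvw, hc.trans (vert_add_vert v w)⟩
  · rintro x ⟨v, w, hvw, rfl⟩
    obtain ⟨c, hc⟩ := G.differenceSpan_kConn_le_range_boundary hk
      (Submodule.subset_span ⟨v, w, hvw, rfl⟩)
    exact Submodule.subset_span ⟨c, ⟨v, w, hvw, hc.trans (vert_add_vert v w).symm⟩, hc⟩

theorem ker_boundary_le_weakCycleSpace (k : ℕ) :
    LinearMap.ker G.boundary ≤ G.weakCycleSpace k := by
  intro c hc
  rcases isEmpty_or_nonempty V with _ | ⟨⟨v⟩⟩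
  · have : IsEmpty E := Function.isEmpty G.ends
    rw [Subsingleton.elim c 0]
    exact Submodule.zero_mem _
  · refine Submodule.subset_span ⟨v, v, .inl rfl, ?_⟩
    rw [vert_add_vert, sub_self, LinearMap.mem_ker.1 hc]

end Homology

theorem stmt5 (G : Multigraph V E) (k : ℕ) (hk : 0 < k) :
    (Module.finrank (ZMod 2) (G.weakCycleSpace k) : ℤ) =
      (Fintype.card E : ℤ) - (G.conk k : ℤ) + (G.con : ℤ) := by
  have weak_rank_nullity :=
    finrank_map_add_finrank_ker_of_ker_le G.boundary (G.ker_boundary_le_weakCycleSpace k)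
  have rank_nullity := G.boundary.finrank_range_add_finrank_ker
  rw [G.map_boundary_weakCycleSpace hk] at weak_rank_nullity
  rw [G.range_boundary_eq_differenceSpan_kConn_one, Module.finrank_fintype_fun_eq_card]
    at rank_nullity
  have card_classes : _ + G.conk k = _ :=
    finrank_differenceSpan_add_card_quotient (ZMod 2) (G.KConn k)
  have card_components : _ + G.con = _ :=
    finrank_differenceSpan_add_card_quotient (ZMod 2) (G.KConn 1)
  omega

end Multigraph
end

section
/- Let G be a finite undirected multigraph and A an Abelian group. If a function f:E→A, extended F₂-linearly to subsets of E, takes every element of the Cycle Space of G to 0, then f is balanced. Conversely, if f:E→A is balanced, then f takes every element of the Cycle Space of G to 0 and takes every element of the 3-Weak Cycle Space of G to an element of A₂ (the subgroup of elements a∈A with 2a=0). -/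
open Finset

namespace Multigraph

variable {V E : Type*} [Fintype V] [Fintype E] [DecidableEq V] [DecidableEq E]

/-!
Modulo 2, a vector with boundary `v + w` contains a ttrail from `v` to `w`, so every element of the
cycle space is an edge-disjoint union of closed ttrails; hence `f` is balanced iff it vanishes on
the cycle space `C`.  Call two edges *in series* if every element of `C` contains both or neither.
If `v` and `w` are joined by disjoint ttrails `P`, `Q`, `R`, then `P = (P + Q) ∩ (P + R)`, so the
3-weak cycle space lies in the Boolean algebra generated by `C`, and each of its elements is a
disjoint union of series classes of edges lying on cycles.  By a Menger-type argument such a class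
`K` is itself an intersection `x ∩ y` of two elements of `C`, and inclusion–exclusion gives
`2 f(K) = f(x) + f(y) - f(x + y) = 0`.
-/

section

open Function (support)

variable {V E A : Type*} [AddCommGroup A] {G : Multigraph V E} {f : E → A} {S T K M : Set E}
  {a b u : V} {e d : E} {p : List (V × E)} {c z : E → ZMod 2}

/-! ### Vectors over `ZMod 2` -/

lemma zmod_two_ne_zero_iff {x : ZMod 2} : x ≠ 0 ↔ x = 1 := by
  revert x; decide

lemma support_add_eq_sdiff {ι : Type*} {c q : ι → ZMod 2} (h : support q ⊆ support c) :
    support (c + q) = support c \ support q := by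
  ext i
  have hi : q i ≠ 0 → c i ≠ 0 := @h i
  simp only [Set.mem_sdiff, Function.mem_support, Pi.add_apply]
  generalize q i = x, c i = y at hi ⊢
  revert x y
  decide

lemma support_add_ssubset {ι : Type*} {c q : ι → ZMod 2} (h : support q ⊆ support c)
    (hq : (support q).Nonempty) : support (c + q) ⊂ support c := by
  obtain ⟨i, hi⟩ := hq
  rw [support_add_eq_sdiff h]
  exact Set.ssubset_iff_exists.2 ⟨Set.sdiff_subset, i, h hi, fun hi' => hi'.2 hi⟩

lemma support_single_one {ι : Type*} [DecidableEq ι] (i : ι) :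
    support (Pi.single i 1 : ι → ZMod 2) = {i} :=
  Pi.support_single_of_ne one_ne_zero

lemma support_add_single_subset {ι : Type*} [DecidableEq ι] (c : ι → ZMod 2) (i : ι) :
    support (c + Pi.single i 1) ⊆ insert i (support c) := by
  intro j hj
  by_cases hji : j = i
  · exact .inl hji
  · exact .inr (by simpa [hji] using hj)

lemma add_mul_add_eq_left_of_mul_eq_zero {ι : Type*} {x y t : ι → ZMod 2} (hxy : x * y = 0)
    (hxt : x * t = 0) (hyt : y * t = 0) : (x + y) * (x + t) = x := by
  have mul_self : x * x = x := funext fun e => (by decide : ∀ r : ZMod 2, r * r = r) (x e)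
  rw [add_mul, mul_add, mul_add, mul_self, hxt, mul_comm y, hxy, hyt]
  simp

/-! ### Edges and ttrails -/

lemma mem_ends_of_edgeVec_ne_zero [DecidableEq V] (h : G.edgeVec e a ≠ 0) : a ∈ G.ends e := by
  revert h
  unfold edgeVec
  induction G.ends e using Sym2.ind with
  | _ x y =>
    contrapose!
    simp +contextual [not_or]

/-- The edges of a ttrail, as a set; `support_eps` identifies it with the vector `eps p`. -/
def edgeSet (p : List (V × E)) : Set E := {e | e ∈ p.map Prod.snd}

lemma edgeSet_nil : edgeSet ([] : List (V × E)) = ∅ := by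
  simp [edgeSet]

lemma edgeSet_cons (v : V) (e : E) (p : List (V × E)) :
    edgeSet ((v, e) :: p) = insert e (edgeSet p) := by
  ext; simp [edgeSet]

lemma isTtrail_cons_iff {x y v : V} :
    G.IsTtrail x y ((v, e) :: p) ↔
      v = x ∧ e ∉ edgeSet p ∧ ∃ w, G.ends e = s(x, w) ∧ G.IsTtrail w y p := by
  simp only [IsTtrail, IsChain, edgeSet, List.map_cons, List.nodup_cons, Set.mem_ofPred_eq]
  tauto

lemma support_eps [DecidableEq E] (p : List (V × E)) : support (eps p) = edgeSet p := by
  ext; simp [eps, edgeSet]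

lemma eps_cons [DecidableEq E] (v : V) (he : e ∉ edgeSet p) :
    eps ((v, e) :: p) = Pi.single e 1 + eps p := by
  funext x
  by_cases hx : x = e
  · subst hx
    simpa [eps, edgeSet] using he
  · simp only [eps, List.map_cons, List.mem_cons, hx, Pi.add_apply, Pi.single_apply, if_false,
      false_or, zero_add]

lemma EdgeDisjoint.eps_mul_eps [DecidableEq E] {q : List (V × E)} (h : EdgeDisjoint p q) :
    eps p * eps q = 0 := by
  rw [← Function.support_eq_empty_iff, Function.support_mul', support_eps, support_eps]
  exact Set.disjoint_iff_inter_eq_empty.1 (Set.disjoint_left.2 h)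

/-! ### Sums over edge sets -/

variable [Fintype E]

lemma fSum_eq_sum_ite (f : E → A) (c : E → ZMod 2) :
    fSum f c = ∑ e, if c e = 1 then f e else 0 :=
  Finset.sum_filter _ _

lemma fSum_add_add_two_nsmul_fSum_mul (f : E → A) (c d : E → ZMod 2) :
    fSum f (c + d) + 2 • fSum f (c * d) = fSum f c + fSum f d := by
  simp only [fSum_eq_sum_ite, Finset.smul_sum, ← Finset.sum_add_distrib, Pi.add_apply,
    Pi.mul_apply]
  refine Finset.sum_congr rfl fun e _ => ?_
  have cases_zmod_two : ∀ x : ZMod 2, x = 0 ∨ x = 1 := by decide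
  have one_add_one_ne_one : (1 + 1 : ZMod 2) ≠ 1 := by decide
  rcases cases_zmod_two (c e) with hc | hc <;> rcases cases_zmod_two (d e) with hd | hd <;>
    simp [hc, hd, one_add_one_ne_one, two_nsmul]

lemma fSum_zero (f : E → A) : fSum f 0 = 0 := by
  simp [fSum]

lemma fSum_eq_add_of_support_subset (f : E → A) {c q : E → ZMod 2} (h : support q ⊆ support c) :
    fSum f c = fSum f (c + q) + fSum f q := by
  have disjoint : (c + q) * q = 0 := by
    rw [← Function.support_eq_empty_iff, Function.support_mul', support_add_eq_sdiff h,
      Set.sdiff_inter_self]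
  have := fSum_add_add_two_nsmul_fSum_mul f (c + q) q
  rwa [disjoint, fSum_zero, smul_zero, add_zero, add_assoc, ZModModule.add_self, add_zero] at this

lemma fSum_mul_mem_torsion2 {x y : E → ZMod 2} (hx : fSum f x = 0) (hy : fSum f y = 0)
    (hxy : fSum f (x + y) = 0) : fSum f (x * y) ∈ torsion2 A := by
  have := fSum_add_add_two_nsmul_fSum_mul f x y
  rwa [hxy, hx, hy, zero_add, zero_add] at this

lemma fSum_eps [DecidableEq E] (f : E → A) (hp : (p.map Prod.snd).Nodup) :
    fSum f (eps p) = pathSum (0 : V → A) f p := by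
  have filter_eps : (univ.filter fun e => eps p e = 1) = (p.map Prod.snd).toFinset := by
    ext e
    simp only [eps, Finset.mem_filter_univ, List.mem_toFinset, ite_eq_left_iff, zero_ne_one,
      imp_false, not_not]
  rw [fSum, filter_eps, List.sum_toFinset f hp]
  simp [pathSum, Function.comp_def]

/-! ### Boundaries -/

variable [DecidableEq V]

lemma mem_cycleSpace : c ∈ G.cycleSpace ↔ G.boundary c = 0 := LinearMap.mem_ker

lemma boundary_single [DecidableEq E] (h : G.ends e = s(a, b)) :
    G.boundary (Pi.single e 1) = vert a + vert b := by
  funext v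
  simp [boundary, edgeVec, vert, h, Pi.single_apply]

lemma boundary_add_single [DecidableEq E] (hc : G.boundary c = vert u + vert b)
    (h : G.ends e = s(a, u)) : G.boundary (c + Pi.single e 1) = vert a + vert b := by
  rw [add_comm, map_add, boundary_single h, hc, ZModModule.add_add_add_cancel]

lemma IsTtrail.boundary_eps [DecidableEq E] (hp : G.IsTtrail a b p) :
    G.boundary (eps p) = vert a + vert b := by
  induction p generalizing a with
  | nil =>
    obtain rfl : a = b := hp.1
    have eps_nil : eps ([] : List (V × E)) = 0 := by funext; simp [eps]
    rw [eps_nil, map_zero, ZModModule.add_self]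
  | cons ve p ih =>
    obtain ⟨rfl, he, w, hw, hp⟩ := isTtrail_cons_iff.1 hp
    rw [eps_cons _ he, add_comm, boundary_add_single (ih hp) hw]

lemma exists_mem_support_ends_eq (hab : a ≠ b) (h : G.boundary c = vert a + vert b) :
    ∃ e ∈ support c, ∃ u, G.ends e = s(a, u) := by
  have sum_ne_zero : ∑ e, c e * G.edgeVec e a ≠ 0 := by
    change G.boundary c a ≠ 0
    simp [h, vert, hab]
  obtain ⟨e, -, he⟩ := Finset.exists_ne_zero_of_sum_ne_zero sum_ne_zero
  exact ⟨e, left_ne_zero_of_mul he, mem_ends_of_edgeVec_ne_zero (right_ne_zero_of_mul he)⟩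

theorem exists_isTtrail_of_boundary_eq (h : G.boundary c = vert a + vert b) :
    ∃ p, G.IsTtrail a b p ∧ edgeSet p ⊆ support c := by
  classical
  induction hs : support c using WellFoundedLT.induction generalizing a c with
  | _ s ih =>
  subst hs
  by_cases hab : a = b
  · exact ⟨[], ⟨hab, List.nodup_nil⟩, by simp [edgeSet_nil]⟩
  obtain ⟨e, he, u, hu⟩ := exists_mem_support_ends_eq hab h
  have single_subset : support (Pi.single e 1 : E → ZMod 2) ⊆ support c := by
    rwa [support_single_one, Set.singleton_subset_iff]
  have support_eq := support_add_eq_sdiff single_subset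
  rw [support_single_one] at support_eq
  obtain ⟨p, hp, hpc⟩ := ih _
    (support_add_ssubset single_subset (by simp))
    (boundary_add_single h (hu.trans Sym2.eq_swap)) rfl
  rw [support_eq] at hpc
  refine ⟨(a, e) :: p, isTtrail_cons_iff.2 ⟨rfl, fun hep => (hpc hep).2 rfl, u, hu, hp⟩, ?_⟩
  rw [edgeSet_cons]
  exact Set.insert_subset he (hpc.trans Set.sdiff_subset)

/-! ### Balanced functions and the cycle space -/

lemma IsTtrail.eps_mem_cycleSpace [DecidableEq E] (hp : G.IsTtrail a a p) :
    eps p ∈ G.cycleSpace := by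
  rw [mem_cycleSpace, hp.boundary_eps, ZModModule.add_self]

lemma exists_closed_isTtrail_of_mem_cycleSpace (hc : c ∈ G.cycleSpace) (he : c e ≠ 0) :
    ∃ x p, G.IsTtrail x x p ∧ e ∈ edgeSet p ∧ edgeSet p ⊆ support c := by
  classical
  obtain ⟨x, y, hxy⟩ : ∃ x y, G.ends e = s(x, y) := Sym2.exists.1 ⟨_, rfl⟩
  have boundary_eq : G.boundary (c + Pi.single e 1) = vert y + vert x := by
    rw [map_add, mem_cycleSpace.1 hc, zero_add, boundary_single (hxy.trans Sym2.eq_swap)]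
  obtain ⟨p, hp, hpc⟩ := exists_isTtrail_of_boundary_eq boundary_eq
  rw [support_add_eq_sdiff (by simpa [support_single_one] using he), support_single_one] at hpc
  refine ⟨x, (x, e) :: p, isTtrail_cons_iff.2 ⟨rfl, fun hep => (hpc hep).2 rfl, y, hxy, hp⟩, ?_⟩
  rw [edgeSet_cons]
  exact ⟨Set.mem_insert _ _, Set.insert_subset he (hpc.trans Set.sdiff_subset)⟩

theorem balancedE_of_forall_mem_cycleSpace (h : ∀ c ∈ G.cycleSpace, fSum f c = 0) :
    G.BalancedE f := by
  classical
  intro x p hp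
  rw [← fSum_eps f hp.2]
  exact h _ hp.eps_mem_cycleSpace

theorem BalancedE.fSum_eq_zero (hf : G.BalancedE f) (hc : c ∈ G.cycleSpace) :
    fSum f c = 0 := by
  classical
  induction hs : support c using WellFoundedLT.induction generalizing c with
  | _ s ih =>
  subst hs
  by_cases hc0 : c = 0
  · rw [hc0, fSum_zero]
  obtain ⟨e, he⟩ := Function.ne_iff.1 hc0
  obtain ⟨x, p, hp, hep, hpc⟩ := exists_closed_isTtrail_of_mem_cycleSpace hc he
  rw [← support_eps p] at hep hpc
  calc fSum f c = fSum f (c + eps p) + fSum f (eps p) := fSum_eq_add_of_support_subset f hpc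
    _ = 0 + pathSum (0 : V → A) f p := by
      rw [ih _ (support_add_ssubset hpc ⟨e, hep⟩) (add_mem hc hp.eps_mem_cycleSpace) rfl,
        fSum_eps f hp.2]
    _ = 0 := by rw [hf x p hp, add_zero]

/-! ### Joining vertices inside an edge set -/

/-- The vertices `a` and `b` lie in the same component of the graph with edge set `S`, expressed
homologically so that paths can be concatenated by adding vectors. -/
def JoinedIn (G : Multigraph V E) (S : Set E) (a b : V) : Prop :=
  ∃ c, G.boundary c = vert a + vert b ∧ support c ⊆ S

namespace JoinedIn

lemma refl (G : Multigraph V E) (S : Set E) (a : V) : G.JoinedIn S a a :=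
  ⟨0, by rw [map_zero, ZModModule.add_self], by simp⟩

lemma mono (hST : S ⊆ T) (h : G.JoinedIn S a b) : G.JoinedIn T a b :=
  h.imp fun _ hc => ⟨hc.1, hc.2.trans hST⟩

lemma cons (he : G.ends e = s(a, u)) (h : G.JoinedIn S u b) : G.JoinedIn (insert e S) a b := by
  classical
  obtain ⟨c, hc, hcS⟩ := h
  exact ⟨c + Pi.single e 1, boundary_add_single hc he,
    (support_add_single_subset c e).trans (Set.insert_subset_insert hcS)⟩

lemma exists_isTtrail (h : G.JoinedIn S a b) : ∃ p, G.IsTtrail a b p ∧ edgeSet p ⊆ S := by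
  obtain ⟨c, hc, hcS⟩ := h
  obtain ⟨p, hp, hpc⟩ := exists_isTtrail_of_boundary_eq hc
  exact ⟨p, hp, hpc.trans hcS⟩

lemma sdiff_singleton_or (h : G.JoinedIn S u b) (he : G.ends e = s(a, u)) :
    G.JoinedIn (S \ {e}) a b ∨ G.JoinedIn (S \ {e}) u b := by
  classical
  obtain ⟨c, hc, hcS⟩ := h
  by_cases hce : c e = 0
  · exact .inr ⟨c, hc, Set.subset_sdiff_singleton hcS (by simpa using hce)⟩
  · refine .inl ⟨c + Pi.single e 1, boundary_add_single hc he, ?_⟩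
    rw [support_add_eq_sdiff (by simpa [support_single_one] using hce), support_single_one]
    exact Set.sdiff_subset_sdiff_left hcS

end JoinedIn

lemma IsTtrail.joinedIn (hp : G.IsTtrail a b p) : G.JoinedIn (edgeSet p) a b := by
  classical
  exact ⟨eps p, hp.boundary_eps, (support_eps p).subset⟩

/-- Every edge of `S` lies in the component of `b` in the graph with edge set `S`; this replaces the
notion of a path ending at `b`, without its ordering. -/
def AttachedTo (G : Multigraph V E) (S : Set E) (b : V) : Prop :=
  ∀ e ∈ S, ∀ x ∈ G.ends e, G.JoinedIn S x b

lemma IsTtrail.attachedTo_edgeSet (hp : G.IsTtrail a b p) : G.AttachedTo (edgeSet p) b := by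
  induction p generalizing a with
  | nil => simp [AttachedTo, edgeSet_nil]
  | cons ve p ih =>
    have joined_start := hp.joinedIn
    obtain ⟨rfl, -, w, hw, hp⟩ := isTtrail_cons_iff.1 hp
    have edgeSet_subset : edgeSet p ⊆ edgeSet (ve :: p) :=
      (Set.subset_insert _ _).trans (edgeSet_cons _ _ _).superset
    intro e he x hx
    rcases (edgeSet_cons _ _ _).subset he with rfl | he
    · rw [hw, Sym2.mem_iff] at hx
      rcases hx with rfl | rfl
      · exact joined_start
      · exact hp.joinedIn.mono edgeSet_subset
    · exact (ih hp e he x hx).mono edgeSet_subset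

lemma JoinedIn.exists_attachedTo (h : G.JoinedIn S a b) :
    ∃ T ⊆ S, G.AttachedTo T b ∧ G.JoinedIn T a b := by
  obtain ⟨p, hp, hpS⟩ := h.exists_isTtrail
  exact ⟨edgeSet p, hpS, hp.attachedTo_edgeSet, hp.joinedIn⟩

-- Follow `p` until it first meets the component of `b` in `S` or in `T`: before that, it uses no
-- edge of either set.
lemma IsTtrail.joinedIn_union_sdiff_or (hp : G.IsTtrail a b p) (hS : G.AttachedTo S b)
    (hT : G.AttachedTo T b) :
    G.JoinedIn (S ∪ edgeSet p \ T) a b ∨ G.JoinedIn (T ∪ edgeSet p \ S) a b := by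
  induction p generalizing a with
  | nil =>
    obtain rfl : a = b := hp.1
    exact .inl (.refl G _ a)
  | cons ve p ih =>
    obtain ⟨v, e⟩ := ve
    obtain ⟨rfl, -, w, hw, hp⟩ := isTtrail_cons_iff.1 hp
    by_cases haS : G.JoinedIn S v b
    · exact .inl (haS.mono Set.subset_union_left)
    by_cases haT : G.JoinedIn T v b
    · exact .inr (haT.mono Set.subset_union_left)
    have hv : v ∈ G.ends e := by simp [hw]
    have heS : e ∉ S := fun he => haS (hS e he v hv)
    have heT : e ∉ T := fun he => haT (hT e he v hv)
    rw [edgeSet_cons, Set.insert_sdiff_of_notMem _ heS, Set.insert_sdiff_of_notMem _ heT,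
      Set.union_insert, Set.union_insert]
    exact (ih hp).imp (.cons hw) (.cons hw)

/-! ### Two paths meeting only in prescribed edges -/

/-- Inside `M` there are two paths from `a` to `b` whose common edges all lie in `K`.  A path is
encoded as an edge set in which `a` and `b` are joined. -/
def TwoJoinedIn (G : Multigraph V E) (K M : Set E) (a b : V) : Prop :=
  ∃ S ⊆ M, ∃ T ⊆ M, S ∩ T ⊆ K ∧ G.JoinedIn S a b ∧ G.JoinedIn T a b

namespace TwoJoinedIn

lemma of_joinedIn_of_cons (hd : G.ends d = s(a, u)) (hdM : d ∈ M) (hSM : S ⊆ M) (hTM : T ⊆ M)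
    (hdS : d ∉ S) (hST : S ∩ T ⊆ K) (hS : G.JoinedIn S a b) (hT : G.JoinedIn T u b) :
    G.TwoJoinedIn K M a b := by
  refine ⟨S, hSM, insert d T, Set.insert_subset hdM hTM, ?_, hS, hT.cons hd⟩
  rwa [Set.inter_insert_of_notMem hdS]

lemma cons_of_notMem (hd : G.ends d = s(a, u)) (hdM : d ∈ M) (hSM : S ⊆ M) (hTM : T ⊆ M)
    (hdS : d ∉ S) (hdT : d ∉ T) (hST : S ∩ T ⊆ K) (hS : G.JoinedIn S u b)
    (hT : G.JoinedIn T u b) (hab : G.JoinedIn (M \ {d}) a b) : G.TwoJoinedIn K M a b := by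
  obtain ⟨S', hS'S, hS'b, hS'⟩ := hS.exists_attachedTo
  obtain ⟨T', hT'T, hT'b, hT'⟩ := hT.exists_attachedTo
  obtain ⟨r, hr, hrM⟩ := hab.exists_isTtrail
  have hdr : d ∉ edgeSet r := fun h => (hrM h).2 rfl
  have hrM : edgeSet r ⊆ M := hrM.trans Set.sdiff_subset
  rcases hr.joinedIn_union_sdiff_or hS'b hT'b with h | h
  · refine of_joinedIn_of_cons hd hdM ?_ (hT'T.trans hTM) ?_ ?_ h hT' <;> grind
  · refine of_joinedIn_of_cons hd hdM ?_ (hS'S.trans hSM) ?_ ?_ h hS' <;> grind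

lemma cons (hd : G.ends d = s(a, u)) (hdM : d ∈ M) (h : G.TwoJoinedIn K M u b)
    (hab : d ∉ K → G.JoinedIn (M \ {d}) a b) : G.TwoJoinedIn K M a b := by
  obtain ⟨S, hSM, T, hTM, hST, hS, hT⟩ := h
  by_cases hdK : d ∈ K
  · refine ⟨insert d S, Set.insert_subset hdM hSM, insert d T, Set.insert_subset hdM hTM, ?_,
      hS.cons hd, hT.cons hd⟩
    rw [← Set.insert_inter_distrib]
    exact Set.insert_subset hdK hST
  have hSdM : S \ {d} ⊆ M := Set.sdiff_subset.trans hSM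
  have hTdM : T \ {d} ⊆ M := Set.sdiff_subset.trans hTM
  rcases hS.sdiff_singleton_or hd with hSa | hSu
  · exact of_joinedIn_of_cons hd hdM hSdM hTM (by simp) (by grind) hSa hT
  rcases hT.sdiff_singleton_or hd with hTa | hTu
  · exact of_joinedIn_of_cons hd hdM hTdM hSM (by simp) (by grind) hTa hS
  exact cons_of_notMem hd hdM hSdM hTdM (by simp) (by simp) (by grind) hSu hTu (hab hdK)

end TwoJoinedIn

-- The case of two paths of the edge version of Menger's theorem, with the edges of `K` doubled.
theorem JoinedIn.twoJoinedIn (h : G.JoinedIn M a b)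
    (hcut : ∀ d ∉ K, G.JoinedIn (M \ {d}) a b) : G.TwoJoinedIn K M a b := by
  obtain ⟨p, hp, hpM⟩ := h.exists_isTtrail
  clear h
  induction p generalizing a with
  | nil =>
    obtain rfl : a = b := hp.1
    exact ⟨∅, by simp, ∅, by simp, by simp, .refl G _ a, .refl G _ a⟩
  | cons ve p ih =>
    obtain ⟨v, d⟩ := ve
    obtain ⟨rfl, hdp, u, hu, htail⟩ := isTtrail_cons_iff.1 hp
    rw [edgeSet_cons, Set.insert_subset_iff] at hpM
    refine .cons hu hpM.1 (ih (fun d' hd' => ?_) htail hpM.2) (hcut d)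
    by_cases hdd' : d' = d
    · subst hdd'
      exact htail.joinedIn.mono (Set.subset_sdiff_singleton hpM.2 hdp)
    · refine ((hcut d' hd').cons (hu.trans Sym2.eq_swap)).mono ?_
      exact Set.insert_subset ⟨hpM.1, Ne.symm hdd'⟩ subset_rfl

/-! ### Series classes -/

/-- Two edges are in series if every element of the cycle space contains both or neither. -/
def InSeries (G : Multigraph V E) (e d : E) : Prop := ∀ z ∈ G.cycleSpace, z e = z d

/-- The setoid on edges whose classes are the series classes, along which sums are split. -/
def inSeriesSetoid (G : Multigraph V E) : Setoid E where
  r := G.InSeries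
  iseqv :=
    ⟨fun _ _ _ => rfl, fun h z hz => (h z hz).symm, fun h h' z hz => (h z hz).trans (h' z hz)⟩

lemma joinedIn_iff_exists_mem_cycleSpace (he : G.ends e = s(a, b)) (heS : e ∉ S) :
    G.JoinedIn S a b ↔ ∃ z ∈ G.cycleSpace, z e = 1 ∧ support z ⊆ insert e S := by
  classical
  constructor
  · rintro ⟨c, hc, hcS⟩
    have hce : c e = 0 := Function.notMem_support.1 fun h => heS (hcS h)
    refine ⟨c + Pi.single e 1, ?_, by simp [hce],
      (support_add_single_subset c e).trans (Set.insert_subset_insert hcS)⟩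
    rw [mem_cycleSpace, map_add, hc, boundary_single he, ZModModule.add_self]
  · rintro ⟨z, hz, hze, hzS⟩
    refine ⟨z + Pi.single e 1, ?_, ?_⟩
    · rw [map_add, mem_cycleSpace.1 hz, boundary_single he, zero_add]
    · rw [support_add_eq_sdiff (by simp [hze]), support_single_one]
      exact Set.sdiff_singleton_subset_iff.2 hzS

lemma exists_mem_cycleSpace_of_not_inSeries (hz : z ∈ G.cycleSpace) (hze : z e = 1)
    (hed : ¬ G.InSeries e d) : ∃ x ∈ G.cycleSpace, x e = 1 ∧ x d = 0 := by
  simp only [InSeries, not_forall] at hed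
  obtain ⟨y, hy, hyed⟩ := hed
  have choose : ∀ ze zd ye yd : ZMod 2, ze = 1 → ye ≠ yd →
      (ze = 1 ∧ zd = 0) ∨ (ye = 1 ∧ yd = 0) ∨ (ze + ye = 1 ∧ zd + yd = 0) := by decide
  rcases choose (z e) (z d) (y e) (y d) hze hyed with h | h | h
  exacts [⟨z, hz, h⟩, ⟨y, hy, h⟩, ⟨z + y, add_mem hz hy, h⟩]

theorem exists_mul_eq_one_iff_inSeries (hz : z ∈ G.cycleSpace) (hze : z e = 1) :
    ∃ x ∈ G.cycleSpace, ∃ y ∈ G.cycleSpace, ∀ d, (x * y) d = 1 ↔ G.InSeries e d := by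
  obtain ⟨a, b, hab⟩ : ∃ a b, G.ends e = s(a, b) := Sym2.exists.1 ⟨_, rfl⟩
  have joined : G.JoinedIn {e}ᶜ a b :=
    (joinedIn_iff_exists_mem_cycleSpace hab (by simp)).2 ⟨z, hz, hze, by simp [Set.insert_eq]⟩
  have joined_sdiff (d : E) (hd : d ∉ {d | G.InSeries e d}) : G.JoinedIn ({e}ᶜ \ {d}) a b := by
    obtain ⟨x, hx, hxe, hxd⟩ := exists_mem_cycleSpace_of_not_inSeries hz hze hd
    refine (joinedIn_iff_exists_mem_cycleSpace hab (by simp)).2 ⟨x, hx, hxe, fun g hg => ?_⟩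
    have hgd : g ≠ d := by rintro rfl; exact hg hxd
    simp [hgd, em]
  obtain ⟨S, hSe, T, hTe, hST, hS, hT⟩ := joined.twoJoinedIn joined_sdiff
  obtain ⟨x, hx, hxe, hxS⟩ := (joinedIn_iff_exists_mem_cycleSpace hab (fun h => hSe h rfl)).1 hS
  obtain ⟨y, hy, hye, hyT⟩ := (joinedIn_iff_exists_mem_cycleSpace hab (fun h => hTe h rfl)).1 hT
  refine ⟨x, hx, y, hy, fun d => ⟨fun h => ?_, fun h => ?_⟩⟩
  · have hxyd : x d * y d ≠ 0 := zmod_two_ne_zero_iff.2 h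
    have hd : d ∈ insert e (S ∩ T) := by
      rw [Set.insert_inter_distrib]
      exact ⟨hxS (left_ne_zero_of_mul hxyd), hyT (right_ne_zero_of_mul hxyd)⟩
    rcases hd with rfl | hd
    exacts [fun _ _ => rfl, hST hd]
  · rw [Pi.mul_apply, ← h x hx, ← h y hy, hxe, hye, mul_one]

/-! ### Unions of series classes -/

/-- The edge sets that are unions of series classes and contain no bridge, a bridge being an edge on
which the cycle space vanishes.  Multiplication of vectors is intersection of edge sets. -/
def seriesAlgebra (G : Multigraph V E) : NonUnitalSubalgebra (ZMod 2) (E → ZMod 2) where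
  carrier := {c | (∀ e d, G.InSeries e d → c e = c d) ∧
    ∀ e, (∀ z ∈ G.cycleSpace, z e = 0) → c e = 0}
  zero_mem' := ⟨fun _ _ _ => rfl, fun _ _ => rfl⟩
  add_mem' hx hy :=
    ⟨fun e d h => congrArg₂ (· + ·) (hx.1 e d h) (hy.1 e d h),
      fun e h => by simp [hx.2 e h, hy.2 e h]⟩
  mul_mem' hx hy :=
    ⟨fun e d h => congrArg₂ (· * ·) (hx.1 e d h) (hy.1 e d h), fun e h => by simp [hx.2 e h]⟩
  smul_mem' r _ hx :=
    ⟨fun e d h => congrArg (r * ·) (hx.1 e d h), fun e h => by simp [hx.2 e h]⟩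

lemma cycleSpace_le_seriesAlgebra (G : Multigraph V E) :
    G.cycleSpace ≤ G.seriesAlgebra.toSubmodule :=
  fun c hc => ⟨fun _ _ h => h c hc, fun _ h => h c hc⟩

lemma IsWeakCycle.mem_seriesAlgebra (hc : G.IsWeakCycle 3 c) : c ∈ G.seriesAlgebra := by
  classical
  obtain ⟨v, w, rfl | ⟨p, hp, hdisj⟩, hcvw⟩ := hc
  · exact G.cycleSpace_le_seriesAlgebra (by rw [mem_cycleSpace, hcvw, ZModModule.add_self])
  have add_mem_algebra {x y : E → ZMod 2} (hx : G.boundary x = vert v + vert w)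
      (hy : G.boundary y = vert v + vert w) : x + y ∈ G.seriesAlgebra :=
    G.cycleSpace_le_seriesAlgebra (by rw [mem_cycleSpace, map_add, hx, hy, ZModModule.add_self])
  have boundary_eps (i : Fin 3) := (hp i).boundary_eps
  have eps_mul_eps {i j : Fin 3} (hij : i ≠ j) := (hdisj i j hij).eps_mul_eps
  have eps_mem : eps (p 0) ∈ G.seriesAlgebra := by
    rw [← add_mul_add_eq_left_of_mul_eq_zero (eps_mul_eps (i := 0) (j := 1) (by decide))
      (eps_mul_eps (i := 0) (j := 2) (by decide)) (eps_mul_eps (by decide))]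
    exact mul_mem (add_mem_algebra (boundary_eps 0) (boundary_eps 1))
      (add_mem_algebra (boundary_eps 0) (boundary_eps 2))
  have c_eq : c + eps (p 0) + eps (p 0) = c := by
    rw [add_assoc, ZModModule.add_self, add_zero]
  rw [← c_eq]
  exact add_mem (add_mem_algebra hcvw (boundary_eps 0)) eps_mem

lemma weakCycleSpace_three_le_seriesAlgebra (G : Multigraph V E) :
    G.weakCycleSpace 3 ≤ G.seriesAlgebra.toSubmodule :=
  Submodule.span_le.2 fun _ hc => IsWeakCycle.mem_seriesAlgebra hc

theorem BalancedE.fSum_mem_torsion2 (hf : G.BalancedE f) (hc : c ∈ G.seriesAlgebra) :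
    fSum f c ∈ torsion2 A := by
  classical
  rw [fSum, Finset.sum_partition G.inSeriesSetoid]
  refine sum_mem fun q hq => ?_
  obtain ⟨e, he, rfl⟩ := Finset.mem_image.1 hq
  have hce : c e = 1 := (Finset.mem_filter.1 he).2
  obtain ⟨z, hz, hze⟩ : ∃ z ∈ G.cycleSpace, z e = 1 := by
    by_contra! h
    have := hc.2 e fun z hz => not_not.1 (mt zmod_two_ne_zero_iff.1 (h z hz))
    exact zmod_two_ne_zero_iff.2 hce this
  obtain ⟨x, hx, y, hy, hxy⟩ := exists_mul_eq_one_iff_inSeries hz hze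
  convert fSum_mul_mem_torsion2 (hf.fSum_eq_zero hx) (hf.fSum_eq_zero hy)
    (hf.fSum_eq_zero (add_mem hx hy)) using 1
  refine Finset.sum_congr (Finset.ext fun d => ?_) fun _ _ => rfl
  have mk_eq_iff : (Quotient.mk G.inSeriesSetoid d = Quotient.mk _ e) ↔ G.InSeries e d :=
    eq_comm.trans Quotient.eq
  simp only [Finset.mem_filter, Finset.mem_univ, true_and, mk_eq_iff, hxy d, and_iff_right_iff_imp]
  exact fun hed => (hc.1 e d hed).symm.trans hce

theorem stmt10_general (G : Multigraph V E) (f : E → A) :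
    ((∀ c ∈ G.cycleSpace, fSum f c = 0) → G.BalancedE f) ∧
    (G.BalancedE f →
      (∀ c ∈ G.cycleSpace, fSum f c = 0) ∧
      ∀ c ∈ G.weakCycleSpace 3, fSum f c ∈ torsion2 A) :=
  ⟨balancedE_of_forall_mem_cycleSpace, fun hf =>
    ⟨fun _ hc => hf.fSum_eq_zero hc,
      fun _ hc => hf.fSum_mem_torsion2 (G.weakCycleSpace_three_le_seriesAlgebra hc)⟩⟩

end

theorem stmt10 (G : Multigraph V E) {A : Type*} [AddCommGroup A] (f : E → A) :
    ((∀ c ∈ G.cycleSpace, fSum f c = 0) → G.BalancedE f) ∧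
    (G.BalancedE f →
      (∀ c ∈ G.cycleSpace, fSum f c = 0) ∧
      ∀ c ∈ G.weakCycleSpace 3, fSum f c ∈ torsion2 A) :=
  G.stmt10_general f

end Multigraph
end
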